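/- arXiv:1807.00885 — 8 statements merged into one kernel-verified Lean document; each statement's English description precedes it below -/
import Mathlib

section
/- Let X be a set with bornology 𝓑 and let ≪ be a binary relation on the power set of X satisfying the six coarse neighborhood properties: (1) X ≪ (X ∖ D) for all D ∈ 𝓑; (2) A ≪ B implies there exists D ∈ 𝓑 with A ∖ D ⊆ B; (3) A ⊆ B, B ≪ C, C ⊆ D implies A ≪ D; (4) A ≪ B₁ and A ≪ B₂ if and only if A ≪ (B₁ ∩ B₂); (5) A ≪ B if and only if (X ∖ B) ≪ (X ∖ A); (6) A ≪ B implies there exists C ⊆ X with A ≪ C ≪ B. Define a relation b on the power set of X by: A b B fails if and only if A ≪ (X ∖ B). Then b is a coarse proximity on X. -/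
/-!
Write `A # B` for `n A (univ \ B)`, the negation of the relation `b`. Since complementation is
involutive, the duality property `h5` says exactly that `#` is symmetric. Each axiom of a coarse
proximity is then the contrapositive of a neighborhood property: bounded sets are `#` everything by
`h1` and monotonicity, `A # B` forces `A ∩ B` into a bounded set by `h2`, the union axiom is `h4`
read through symmetry and De Morgan, and the strong axiom is interpolation `h6` with `E` the
complement of the interpolating set.
-/

/-- A bornology on a set `X`, given as a family `𝓑` of subsets of `X`:
singletons are bounded, subsets of bounded sets are bounded, and
finite unions of bounded sets are bounded. -/
structure IsBornology (X : Type*) (𝓑 : Set (Set X)) : Prop where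
  singleton_mem : ∀ x : X, {x} ∈ 𝓑
  subset_mem : ∀ A ∈ 𝓑, ∀ C ⊆ A, C ∈ 𝓑
  union_mem : ∀ A ∈ 𝓑, ∀ C ∈ 𝓑, A ∪ C ∈ 𝓑

/-- A coarse proximity on a set `X` with bornology `𝓑`: a relation `b` on
the power set of `X` satisfying symmetry, the boundedness axiom, the
unbounded-intersection axiom, the union axiom, and the strong axiom. -/
structure IsCoarseProximity (X : Type*) (𝓑 : Set (Set X)) (b : Set X → Set X → Prop) : Prop where
  symm : ∀ A B : Set X, b A B → b B A
  not_bounded : ∀ A B : Set X, b A B → A ∉ 𝓑 ∧ B ∉ 𝓑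
  inter : ∀ A B : Set X, A ∩ B ∉ 𝓑 → b A B
  union : ∀ A B C : Set X, b (A ∪ B) C ↔ (b A C ∨ b B C)
  strong : ∀ A B : Set X, ¬ b A B → ∃ E : Set X, ¬ b A E ∧ ¬ b (Set.univ \ E) B

/-- If `≪` is a binary relation on the power set of `X` satisfying the six coarse
neighborhood properties, then the relation `b` defined by
`A b B` fails iff `A ≪ (X ∖ B)` is a coarse proximity on `X`. -/
theorem stmt6 {X : Type*} (𝓑 : Set (Set X)) (n : Set X → Set X → Prop)
    (hB : IsBornology X 𝓑)
    (h1 : ∀ D ∈ 𝓑, n Set.univ (Set.univ \ D))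
    (h2 : ∀ A B : Set X, n A B → ∃ D ∈ 𝓑, A \ D ⊆ B)
    (h3 : ∀ A B C D : Set X, A ⊆ B → n B C → C ⊆ D → n A D)
    (h4 : ∀ A B₁ B₂ : Set X, (n A B₁ ∧ n A B₂) ↔ n A (B₁ ∩ B₂))
    (h5 : ∀ A B : Set X, n A B ↔ n (Set.univ \ B) (Set.univ \ A))
    (h6 : ∀ A B : Set X, n A B → ∃ C : Set X, n A C ∧ n C B) :
    IsCoarseProximity X 𝓑 (fun A B => ¬ n A (Set.univ \ B)) := by
  have cc : ∀ A : Set X, Set.univ \ (Set.univ \ A) = A := fun A => by simp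
  have sym : ∀ A B : Set X, n A (Set.univ \ B) ↔ n B (Set.univ \ A) := fun A B => by
    rw [h5 A, cc]
  have bdd : ∀ A B : Set X, B ∈ 𝓑 → n A (Set.univ \ B) := fun A B hb =>
    h3 _ _ _ _ (Set.subset_univ A) (h1 B hb) subset_rfl
  refine ⟨fun A B h h' => h ((sym A B).2 h'), fun A B h => ⟨fun ha => ?_, fun hb => ?_⟩,
    fun A B h h' => ?_, fun A B C => ?_, fun A B h => ?_⟩
  · exact h ((sym A B).2 (bdd B A ha))
  · exact h (bdd A B hb)
  · obtain ⟨D, hD, hsub⟩ := h2 _ _ h'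
    refine h (hB.subset_mem D hD _ fun x hx => ?_)
    by_contra hxD
    exact (hsub ⟨hx.1, hxD⟩).2 hx.2
  · have key : n (A ∪ B) (Set.univ \ C) ↔ n A (Set.univ \ C) ∧ n B (Set.univ \ C) := by
      rw [sym (A ∪ B), sym A, sym B, h4, Set.sdiff_inter_sdiff]
    rw [key, not_and_or]
  · obtain ⟨C, hAC, hCB⟩ := h6 _ _ (not_not.1 h)
    refine ⟨Set.univ \ C, not_not.2 ?_, not_not.2 ?_⟩
    · rwa [cc]
    · rwa [cc]
end

section
/- Let (X, 𝓔) be a connected coarse space, let λ be the asymptotic resemblance induced by 𝓔, and let A, B ⊆ X. Then A ≺ B if and only if A and X ∖ B are asymptotically disjoint (with respect to λ). -/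
/-! If `A ≺ B` and `C' ⊆ X ∖ B` satisfies `C' ⊆ E[A']` with `A' ⊆ A`, then `C'` lies in the bounded
set `K` with `E[A] ⊆ B ∪ K`, so `C'` is bounded. Conversely, given `E`, take `K = E[A] ∖ B` and
`A' = A ∩ E⁻¹[K]`. These sets satisfy `A' λ K`, and if `A'` were bounded then so would be
`K ⊆ E[A']` (`CoarselyBounded.of_subset_entImg`). Hence asymptotic disjointness forces `K` to be
bounded. -/

/-- A coarse structure on `X`: a collection `𝓔` of subsets of `X × X` (entourages)
containing the diagonal, closed under subsets, inverses, unions, and composition. -/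
structure IsCoarseStructure {X : Type*} (𝓔 : Set (Set (X × X))) : Prop where
  diag_mem : {p : X × X | p.1 = p.2} ∈ 𝓔
  subset_mem : ∀ E ∈ 𝓔, ∀ F ⊆ E, F ∈ 𝓔
  inv_mem : ∀ E ∈ 𝓔, {p : X × X | (p.2, p.1) ∈ E} ∈ 𝓔
  union_mem : ∀ E ∈ 𝓔, ∀ F ∈ 𝓔, E ∪ F ∈ 𝓔
  comp_mem : ∀ E ∈ 𝓔, ∀ F ∈ 𝓔, {p : X × X | ∃ z : X, (p.1, z) ∈ E ∧ (z, p.2) ∈ F} ∈ 𝓔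

/-- `(X, 𝓔)` is coarsely connected: each point of `X × X` belongs to some entourage. -/
def CoarselyConnected {X : Type*} (𝓔 : Set (Set (X × X))) : Prop :=
  ∀ p : X × X, ∃ E ∈ 𝓔, p ∈ E

/-- `E[A] = {x ∈ X | ∃ a ∈ A, (x, a) ∈ E}`. -/
def entImg {X : Type*} (E : Set (X × X)) (A : Set X) : Set X :=
  {x : X | ∃ a ∈ A, (x, a) ∈ E}

/-- A subset `A ⊆ X` is coarsely bounded if `A × A` is an entourage. -/
def CoarselyBounded {X : Type*} (𝓔 : Set (Set (X × X))) (A : Set X) : Prop :=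
  A ×ˢ A ∈ 𝓔

/-- `A ≺ B`: for every entourage `E ∈ 𝓔`, `E[A] ⊆ B ∪ K` for some bounded `K`. -/
def Prec {X : Type*} (𝓔 : Set (Set (X × X))) (A B : Set X) : Prop :=
  ∀ E ∈ 𝓔, ∃ K : Set X, CoarselyBounded 𝓔 K ∧ entImg E A ⊆ B ∪ K

/-- The asymptotic resemblance induced by a coarse structure `𝓔`:
`A λ B` iff `A ⊆ E[B]` and `B ⊆ E[A]` for some entourage `E`. -/
def inducedLambda {X : Type*} (𝓔 : Set (Set (X × X))) (A B : Set X) : Prop :=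
  ∃ E ∈ 𝓔, A ⊆ entImg E B ∧ B ⊆ entImg E A

/-- `A` and `C` are asymptotically disjoint (with respect to a boundedness predicate `bdd`
and a relation `l`): for all unbounded `A' ⊆ A` and unbounded `C' ⊆ C`, `A' l C'` fails. -/
def AsympDisjoint {X : Type*} (bdd : Set X → Prop) (l : Set X → Set X → Prop)
    (A C : Set X) : Prop :=
  ∀ A' ⊆ A, ∀ C' ⊆ C, ¬ bdd A' → ¬ bdd C' → ¬ l A' C'

theorem CoarselyBounded.mono {X : Type*} {𝓔 : Set (Set (X × X))} (hE : IsCoarseStructure 𝓔)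
    {S T : Set X} (hT : CoarselyBounded 𝓔 T) (h : S ⊆ T) : CoarselyBounded 𝓔 S :=
  hE.subset_mem _ hT _ (Set.prod_mono h h)

/-- A set `S` contained in the `E`-neighbourhood of a bounded set `T` is bounded, because
`S × S ⊆ E ∘ (T × T) ∘ E⁻¹`. -/
theorem CoarselyBounded.of_subset_entImg {X : Type*} {𝓔 : Set (Set (X × X))}
    (hE : IsCoarseStructure 𝓔) {E : Set (X × X)} (hEm : E ∈ 𝓔) {S T : Set X}
    (hT : CoarselyBounded 𝓔 T) (h : S ⊆ entImg E T) : CoarselyBounded 𝓔 S := by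
  refine hE.subset_mem _ (hE.comp_mem _ (hE.comp_mem E hEm _ hT) _ (hE.inv_mem E hEm)) _ ?_
  rintro ⟨x, y⟩ ⟨hx, hy⟩
  obtain ⟨a, ha, hxa⟩ := h hx
  obtain ⟨b, hb, hyb⟩ := h hy
  exact ⟨b, ⟨a, hxa, ha, hb⟩, hyb⟩

/-- In a connected coarse space `(X, 𝓔)` with induced asymptotic resemblance `λ`,
`A ≺ B` iff `A` and `X ∖ B` are asymptotically disjoint with respect to `λ`. -/
theorem stmt10 {X : Type*} (𝓔 : Set (Set (X × X)))
    (hE : IsCoarseStructure 𝓔) (hconn : CoarselyConnected 𝓔) (A B : Set X) :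
    Prec 𝓔 A B ↔
      AsympDisjoint (CoarselyBounded 𝓔) (inducedLambda 𝓔) A (Set.univ \ B) := by
  constructor
  · rintro hAB A' hA' C' hC' - hC'unb ⟨E, hEm, -, hCE⟩
    obtain ⟨K, hK, hsub⟩ := hAB E hEm
    refine hC'unb (hK.mono hE fun c hc => ?_)
    obtain ⟨a, ha, hca⟩ := hCE hc
    exact (hsub ⟨a, hA' ha, hca⟩).resolve_left (hC' hc).2
  · intro hdis E hEm
    refine ⟨entImg E A \ B, ?_, fun x hx => ?_⟩
    · by_contra hK
      let A' : Set X := {a | a ∈ A ∧ ∃ x ∈ entImg E A \ B, (x, a) ∈ E}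
      have hKA' : entImg E A \ B ⊆ entImg E A' := by
        rintro x ⟨⟨a, ha, hxa⟩, hxB⟩
        exact ⟨a, ⟨ha, x, ⟨⟨a, ha, hxa⟩, hxB⟩, hxa⟩, hxa⟩
      refine hdis A' (fun a ha => ha.1) (entImg E A \ B) (fun x hx => ⟨trivial, hx.2⟩)
        (fun hA' => hK (hA'.of_subset_entImg hE hEm hKA')) hK
        ⟨_, hE.union_mem E hEm _ (hE.inv_mem E hEm), ?_, ?_⟩
      · rintro a ⟨-, x, hx, hxa⟩
        exact ⟨x, hx, Or.inr hxa⟩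
      · intro x hx
        obtain ⟨a, ha, hxa⟩ := hKA' hx
        exact ⟨a, ha, Or.inl hxa⟩
    · by_cases hxB : x ∈ B
      · exact Or.inl hxB
      · exact Or.inr ⟨hx, hxB⟩
end

section
/- Let (X, 𝓔) be a connected coarse space. For A, B ⊆ X define A ≺* B if A ⊆ B and A ≺ B. Then (X, 𝓔) is coarsely normal if and only if for all A, B ⊆ X with A ≺* B there exists C ⊆ X such that A ≺* C and C ≺* B. -/
/-- `(X, 𝓔)` is coarsely normal: whenever `A ≺ B` there is `C` with `A ≺ C ≺ B`. -/
def CoarselyNormal {X : Type*} (𝓔 : Set (Set (X × X))) : Prop :=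
  ∀ A B : Set X, Prec 𝓔 A B → ∃ C : Set X, Prec 𝓔 A C ∧ Prec 𝓔 C B

section

variable {X : Type*} {𝓔 : Set (Set (X × X))} {A A' B B' K L : Set X}

/-- Connectedness is needed here: it supplies an entourage joining a point of `K` to a point of
`L`, so that `K ×ˢ L` lies in a composite of three entourages. -/
lemma CoarselyBounded.union (hE : IsCoarseStructure 𝓔) (hconn : CoarselyConnected 𝓔)
    (hK : CoarselyBounded 𝓔 K) (hL : CoarselyBounded 𝓔 L) : CoarselyBounded 𝓔 (K ∪ L) := by
  rcases K.eq_empty_or_nonempty with rfl | ⟨x, hx⟩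
  · simpa using hL
  rcases L.eq_empty_or_nonempty with rfl | ⟨y, hy⟩
  · simpa using hK
  obtain ⟨E, hEm, hxy⟩ := hconn (x, y)
  have hKL : K ×ˢ L ∈ 𝓔 :=
    hE.subset_mem _ (hE.comp_mem _ hK _ (hE.comp_mem _ hEm _ hL)) _
      fun p hp => ⟨x, ⟨hp.1, hx⟩, y, hxy, hy, hp.2⟩
  refine hE.subset_mem _ (hE.union_mem _ (hE.union_mem _ hK _ hL) _
    (hE.union_mem _ hKL _ (hE.inv_mem _ hKL))) _ ?_
  rintro ⟨a, b⟩ ⟨ha | ha, hb | hb⟩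
  · exact Or.inl (Or.inl ⟨ha, hb⟩)
  · exact Or.inr (Or.inl ⟨ha, hb⟩)
  · exact Or.inr (Or.inr ⟨hb, ha⟩)
  · exact Or.inl (Or.inr ⟨ha, hb⟩)

lemma Prec.mono (hA : A' ⊆ A) (hB : B ⊆ B') (h : Prec 𝓔 A B) : Prec 𝓔 A' B' := by
  intro E hEm
  obtain ⟨K, hK, hsub⟩ := h E hEm
  refine ⟨K, hK, ?_⟩
  rintro x ⟨a, ha, hxa⟩
  exact Set.union_subset_union_left K hB (hsub ⟨a, hA ha, hxa⟩)

lemma Prec.union_left (hE : IsCoarseStructure 𝓔) (hconn : CoarselyConnected 𝓔)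
    (h : Prec 𝓔 A B) (h' : Prec 𝓔 A' B) : Prec 𝓔 (A ∪ A') B := by
  intro E hEm
  obtain ⟨K, hK, hsub⟩ := h E hEm
  obtain ⟨L, hL, hsub'⟩ := h' E hEm
  refine ⟨K ∪ L, hK.union hE hconn hL, ?_⟩
  rintro x ⟨a, ha | ha, hxa⟩
  · exact (hsub ⟨a, ha, hxa⟩).imp_right Or.inl
  · exact (hsub' ⟨a, ha, hxa⟩).imp_right Or.inr

lemma Prec.inter_right (hE : IsCoarseStructure 𝓔) (hconn : CoarselyConnected 𝓔)
    (h : Prec 𝓔 A B) (h' : Prec 𝓔 A B') : Prec 𝓔 A (B ∩ B') := by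
  intro E hEm
  obtain ⟨K, hK, hsub⟩ := h E hEm
  obtain ⟨L, hL, hsub'⟩ := h' E hEm
  refine ⟨K ∪ L, hK.union hE hconn hL, ?_⟩
  intro x hx
  rcases hsub hx with hB | hxK
  · rcases hsub' hx with hB' | hxL
    · exact Or.inl ⟨hB, hB'⟩
    · exact Or.inr (Or.inr hxL)
  · exact Or.inr (Or.inl hxK)

lemma Prec.of_subset_union_bounded (hE : IsCoarseStructure 𝓔) (hconn : CoarselyConnected 𝓔)
    (h : Prec 𝓔 A B') (hK : CoarselyBounded 𝓔 K) (hB : B' ⊆ B ∪ K) : Prec 𝓔 A B := by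
  intro E hEm
  obtain ⟨L, hL, hsub⟩ := h E hEm
  refine ⟨K ∪ L, hK.union hE hconn hL, fun x hx => ?_⟩
  rcases hsub hx with hxB | hxL
  · exact (hB hxB).imp_right Or.inl
  · exact Or.inr (Or.inr hxL)

lemma Prec.exists_subset_union_bounded (hE : IsCoarseStructure 𝓔) (h : Prec 𝓔 A B) :
    ∃ K, CoarselyBounded 𝓔 K ∧ A ⊆ B ∪ K := by
  obtain ⟨K, hK, hsub⟩ := h _ hE.diag_mem
  exact ⟨K, hK, fun a ha => hsub ⟨a, ha, rfl⟩⟩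

end

/-- For a connected coarse space `(X, 𝓔)`, writing `A ≺* B` for `A ⊆ B ∧ A ≺ B`,
coarse normality is equivalent to: `A ≺* B` implies there is `C` with `A ≺* C ≺* B`. -/
theorem stmt13 {X : Type*} (𝓔 : Set (Set (X × X)))
    (hE : IsCoarseStructure 𝓔) (hconn : CoarselyConnected 𝓔) :
    CoarselyNormal 𝓔 ↔
      ∀ A B : Set X, (A ⊆ B ∧ Prec 𝓔 A B) →
        ∃ C : Set X, (A ⊆ C ∧ Prec 𝓔 A C) ∧ (C ⊆ B ∧ Prec 𝓔 C B) := by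
  constructor
  · rintro hN A B ⟨hAB, hP⟩
    obtain ⟨C, hAC, hCB⟩ := hN A B hP
    refine ⟨(C ∪ A) ∩ B, ⟨fun a ha => ⟨Or.inr ha, hAB ha⟩, ?_⟩, Set.inter_subset_right, ?_⟩
    · exact (hAC.mono subset_rfl Set.subset_union_left).inter_right hE hconn hP
    · exact (hCB.union_left hE hconn hP).mono Set.inter_subset_left subset_rfl
  · intro hS A B hP
    obtain ⟨K, hK, hAK⟩ := hP.exists_subset_union_bounded hE
    obtain ⟨C, ⟨-, hAC⟩, -, hCB⟩ :=
      hS A (A ∪ B) ⟨Set.subset_union_left, hP.mono subset_rfl Set.subset_union_right⟩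
    exact ⟨C, hAC, hCB.of_subset_union_bounded hE hconn hK
      (Set.union_subset hAK Set.subset_union_left)⟩
end

section
/- Let (X, 𝓔) be a coarse space and let λ be the asymptotic resemblance induced by 𝓔. Then (X, 𝓔) is coarsely normal if and only if (X, λ) is asymptotically normal. -/
/-- Asymptotic normality: for all asymptotically disjoint `A₁, A₂ ⊆ X` there are
`X₁, X₂` with `X = X₁ ∪ X₂`, `A₁` asymptotically disjoint from `X₁`, and
`A₂` asymptotically disjoint from `X₂`. -/
def AsympNormal {X : Type*} (bdd : Set X → Prop) (l : Set X → Set X → Prop) : Prop :=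
  ∀ A₁ A₂ : Set X, AsympDisjoint bdd l A₁ A₂ →
    ∃ X₁ X₂ : Set X, Set.univ = X₁ ∪ X₂ ∧
      AsympDisjoint bdd l A₁ X₁ ∧ AsympDisjoint bdd l A₂ X₂

theorem CoarselyBounded.subset {X : Type*} {𝓔 : Set (Set (X × X))} (hE : IsCoarseStructure 𝓔)
    {A B : Set X} (hB : CoarselyBounded 𝓔 B) (h : A ⊆ B) : CoarselyBounded 𝓔 A :=
  hE.subset_mem _ hB _ (Set.prod_mono h h)

/-- The image of a bounded set `A` is bounded because `E[A] × E[A] = E ∘ (A × A) ∘ E⁻¹`. -/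
theorem CoarselyBounded.entImg {X : Type*} {𝓔 : Set (Set (X × X))} (hE : IsCoarseStructure 𝓔)
    {A : Set X} (hA : CoarselyBounded 𝓔 A) {E : Set (X × X)} (h : E ∈ 𝓔) :
    CoarselyBounded 𝓔 (entImg E A) := by
  refine hE.subset_mem _ (hE.comp_mem _ (hE.comp_mem _ h _ hA) _ (hE.inv_mem _ h)) _ ?_
  rintro ⟨x, y⟩ ⟨⟨a, ha, hxa⟩, ⟨b, hb, hyb⟩⟩
  exact ⟨b, ⟨a, hxa, ha, hb⟩, hyb⟩

theorem inducedLambda.symm {X : Type*} {𝓔 : Set (Set (X × X))} {A B : Set X}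
    (h : inducedLambda 𝓔 A B) : inducedLambda 𝓔 B A := by
  obtain ⟨E, hE, h₁, h₂⟩ := h
  exact ⟨E, hE, h₂, h₁⟩

theorem AsympDisjoint.symm {X : Type*} {𝓔 : Set (Set (X × X))} {A B : Set X}
    (h : AsympDisjoint (CoarselyBounded 𝓔) (inducedLambda 𝓔) A B) :
    AsympDisjoint (CoarselyBounded 𝓔) (inducedLambda 𝓔) B A :=
  fun B' hB' A' hA' hb ha hl => h A' hA' B' hB' ha hb hl.symm

/-- The dictionary between `≺` and asymptotic disjointness. -/
theorem prec_iff_asympDisjoint_compl {X : Type*} {𝓔 : Set (Set (X × X))}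
    (hE : IsCoarseStructure 𝓔) (A B : Set X) :
    Prec 𝓔 A B ↔ AsympDisjoint (CoarselyBounded 𝓔) (inducedLambda 𝓔) A Bᶜ := by
  constructor
  · rintro h A' hA' C' hC' - hC ⟨E, hEm, -, hCA⟩
    obtain ⟨K, hK, hsub⟩ := h E hEm
    refine hC (hK.subset hE fun c hc => ?_)
    obtain ⟨a, ha, hca⟩ := hCA hc
    exact (hsub ⟨a, hA' ha, hca⟩).resolve_left (hC' hc)
  · intro h E hEm
    refine ⟨entImg E A \ B, ?_, fun x hx => or_iff_not_imp_left.2 fun hB => ⟨hx, hB⟩⟩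
    by_contra hC
    have hCA : entImg E A \ B ⊆ entImg E {a ∈ A | ∃ c ∈ entImg E A \ B, (c, a) ∈ E} := by
      rintro c hc
      obtain ⟨a, ha, hca⟩ := hc.1
      exact ⟨a, ⟨ha, c, hc, hca⟩, hca⟩
    refine h {a ∈ A | ∃ c ∈ entImg E A \ B, (c, a) ∈ E} (fun a ha => ha.1) (entImg E A \ B)
      (fun c hc => hc.2) (fun hA => hC ((hA.entImg hE hEm).subset hE hCA)) hC ?_
    -- `E` need not be symmetric, so the resemblance is witnessed by `E ∪ E⁻¹`.
    refine ⟨_, hE.union_mem _ hEm _ (hE.inv_mem _ hEm), ?_, fun c hc => ?_⟩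
    · rintro a ⟨-, c, hc, hca⟩
      exact ⟨c, hc, Or.inr hca⟩
    · obtain ⟨a, ha, hca⟩ := hCA hc
      exact ⟨a, ha, Or.inl hca⟩

/-- A coarse space `(X, 𝓔)` is coarsely normal iff the induced asymptotic
resemblance space `(X, λ)` is asymptotically normal. -/
theorem stmt14 {X : Type*} (𝓔 : Set (Set (X × X))) (hE : IsCoarseStructure 𝓔) :
    CoarselyNormal 𝓔 ↔
      AsympNormal (CoarselyBounded 𝓔) (inducedLambda 𝓔) := by
  constructor
  · intro h A₁ A₂ hd
    obtain ⟨C, h₁, h₂⟩ := h A₁ A₂ᶜ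
      ((prec_iff_asympDisjoint_compl hE _ _).2 (by rwa [compl_compl]))
    rw [prec_iff_asympDisjoint_compl hE] at h₁ h₂
    rw [compl_compl] at h₂
    exact ⟨Cᶜ, C, (Set.compl_union_self C).symm, h₁, h₂.symm⟩
  · intro h A B hAB
    obtain ⟨X₁, X₂, hX, h₁, h₂⟩ := h A Bᶜ ((prec_iff_asympDisjoint_compl hE _ _).1 hAB)
    have hsub : X₁ᶜ ⊆ X₂ := fun x hx =>
      (hX ▸ Set.mem_univ x : x ∈ X₁ ∪ X₂).resolve_left hx
    refine ⟨X₁ᶜ, (prec_iff_asympDisjoint_compl hE _ _).2 (by rwa [compl_compl]),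
      (prec_iff_asympDisjoint_compl hE _ _).2 fun C' hC' B' hB' => ?_⟩
    exact h₂.symm C' (hC'.trans hsub) B' hB'
end

section
/- Let (X, λ) be an asymptotic resemblance space. For A, B ⊆ X, define A ≺ B if and only if A and X ∖ B are asymptotically disjoint. Then the following are equivalent: (i) for all A, B ⊆ X, A ≺ B implies there exists C ⊆ X with A ≺ C and C ≺ B; (ii) (X, λ) is asymptotically normal. -/
/-!
Asymptotic disjointness is symmetric (because `l` is) and passes to subsets. An interpolant `C`
for `A ≺ B` is therefore the same thing as the cover `X = (X ∖ C) ∪ C` required by normality for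
the asymptotically disjoint pair `A`, `X ∖ B`: from `C` take `X₁ = X ∖ C` and `X₂ = C`, and from a
cover `X₁, X₂` take `C = X₂`, whose complement lies in `X₁`.
-/

/-- An asymptotic resemblance on `X`: an equivalence relation `l` on the power set of `X`
compatible with unions and admitting the splitting property. -/
structure IsAsympResemblance {X : Type*} (l : Set X → Set X → Prop) : Prop where
  refl : ∀ A : Set X, l A A
  symm : ∀ A B : Set X, l A B → l B A
  trans : ∀ A B C : Set X, l A B → l B C → l A C
  union : ∀ A₁ B₁ A₂ B₂ : Set X, l A₁ B₁ → l A₂ B₂ → l (A₁ ∪ A₂) (B₁ ∪ B₂)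
  split : ∀ B₁ B₂ A : Set X, l (B₁ ∪ B₂) A → B₁.Nonempty → B₂.Nonempty →
    ∃ A₁ A₂ : Set X, A₁.Nonempty ∧ A₂.Nonempty ∧ A₁ ⊆ A ∧ A₂ ⊆ A ∧
      A = A₁ ∪ A₂ ∧ l B₁ A₁ ∧ l B₂ A₂

/-- A subset `A ⊆ X` is asymptotically bounded if it is empty or `A λ {x}` for some `x`. -/
def AsympBounded {X : Type*} (l : Set X → Set X → Prop) (A : Set X) : Prop :=
  A = ∅ ∨ ∃ x : X, l A {x}

/-- `(X, λ)` is asymptotically connected: `{x} λ {y}` for all `x, y ∈ X`. -/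
def AsympConnected {X : Type*} (l : Set X → Set X → Prop) : Prop :=
  ∀ x y : X, l {x} {y}

theorem AsympDisjoint.swap {X : Type*} {bdd : Set X → Prop} {l : Set X → Set X → Prop}
    (hl : IsAsympResemblance l) {A C : Set X} (h : AsympDisjoint bdd l A C) :
    AsympDisjoint bdd l C A :=
  fun C' hC A' hA hC' hA' hCA => h A' hA C' hC hA' hC' (hl.symm _ _ hCA)

theorem AsympDisjoint.mono_right {X : Type*} {bdd : Set X → Prop} {l : Set X → Set X → Prop}
    {A C D : Set X} (h : AsympDisjoint bdd l A C) (hDC : D ⊆ C) : AsympDisjoint bdd l A D :=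
  fun A' hA D' hD => h A' hA D' (hD.trans hDC)

/-- For an asymptotic resemblance space `(X, λ)`, defining `A ≺ B` iff `A` and
`X ∖ B` are asymptotically disjoint, the interpolation property of `≺` is
equivalent to asymptotic normality. -/
theorem stmt15 {X : Type*} (l : Set X → Set X → Prop) (hl : IsAsympResemblance l) :
    (∀ A B : Set X,
        AsympDisjoint (AsympBounded l) l A (Set.univ \ B) →
        ∃ C : Set X, AsympDisjoint (AsympBounded l) l A (Set.univ \ C) ∧
          AsympDisjoint (AsympBounded l) l C (Set.univ \ B)) ↔
      AsympNormal (AsympBounded l) l := by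
  constructor
  · intro h A₁ A₂ hA
    have hcompl : Set.univ \ (Set.univ \ A₂) = A₂ := by ext; simp
    obtain ⟨C, hAC, hCA⟩ := h A₁ (Set.univ \ A₂) (hcompl.symm ▸ hA)
    rw [hcompl] at hCA
    exact ⟨Set.univ \ C, C, by simp, hAC, hCA.swap hl⟩
  · intro h A B hAB
    obtain ⟨X₁, X₂, hX, h₁, h₂⟩ := h A (Set.univ \ B) hAB
    exact ⟨X₂, h₁.mono_right fun x hx => (hX ▸ hx.1 : x ∈ X₁ ∪ X₂).resolve_right hx.2,
      h₂.swap hl⟩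
end

section
/- Let (X, 𝓔) be a connected coarse space and let 𝓑 be the bornology of coarsely bounded sets. Then the relation ≺ induces a coarse proximity on (X, 𝓑) — that is, the relation b defined by 'A b B fails if and only if A ≺ (X ∖ B)' is a coarse proximity on X — if and only if (X, 𝓔) is coarsely normal. -/
theorem bounded_subset {X : Type*} {𝓔 : Set (Set (X × X))} (hE : IsCoarseStructure 𝓔)
    {K L : Set X} (hL : CoarselyBounded 𝓔 L) (h : K ⊆ L) : CoarselyBounded 𝓔 K :=
  hE.subset_mem _ hL _ (Set.prod_mono h h)

/-- `E[K] × E[K] ⊆ E ∘ (K × K) ∘ E⁻¹`. -/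
theorem bounded_entImg {X : Type*} {𝓔 : Set (Set (X × X))} (hE : IsCoarseStructure 𝓔)
    {E : Set (X × X)} (hEm : E ∈ 𝓔) {K : Set X} (hK : CoarselyBounded 𝓔 K) :
    CoarselyBounded 𝓔 (entImg E K) := by
  refine hE.subset_mem _ (hE.comp_mem _ hEm _ (hE.comp_mem _ hK _ (hE.inv_mem _ hEm))) _ ?_
  rintro ⟨x, y⟩ ⟨⟨a, ha, hxa⟩, ⟨c, hc, hyc⟩⟩
  exact ⟨a, hxa, c, ⟨ha, hc⟩, hyc⟩

/-- For `k ∈ K` and `l ∈ L`, connectedness provides an entourage `F` containing `(k, l)`, and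
`K × L ⊆ (K × K) ∘ F ∘ (L × L)`. -/
theorem bounded_union {X : Type*} {𝓔 : Set (Set (X × X))} (hE : IsCoarseStructure 𝓔)
    (hconn : CoarselyConnected 𝓔) {K L : Set X} (hK : CoarselyBounded 𝓔 K)
    (hL : CoarselyBounded 𝓔 L) : CoarselyBounded 𝓔 (K ∪ L) := by
  rcases K.eq_empty_or_nonempty with rfl | ⟨k, hk⟩
  · simpa using hL
  rcases L.eq_empty_or_nonempty with rfl | ⟨l, hl⟩
  · simpa using hK
  obtain ⟨F, hF, hkl⟩ := hconn (k, l)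
  have hM : K ×ˢ L ∈ 𝓔 := by
    refine hE.subset_mem _ (hE.comp_mem _ hK _ (hE.comp_mem _ hF _ hL)) _ ?_
    rintro ⟨x, y⟩ ⟨hx, hy⟩
    exact ⟨k, ⟨hx, hk⟩, l, hkl, hl, hy⟩
  refine hE.subset_mem _
    (hE.union_mem _ (hE.union_mem _ hK _ hL) _ (hE.union_mem _ hM _ (hE.inv_mem _ hM))) _ ?_
  rintro ⟨x, y⟩ ⟨hx | hx, hy | hy⟩
  · exact Or.inl (Or.inl ⟨hx, hy⟩)
  · exact Or.inr (Or.inl ⟨hx, hy⟩)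
  · exact Or.inr (Or.inr ⟨hy, hx⟩)
  · exact Or.inl (Or.inr ⟨hx, hy⟩)

theorem prec_compl_symm {X : Type*} {𝓔 : Set (Set (X × X))} (hE : IsCoarseStructure 𝓔)
    {A B : Set X} (h : Prec 𝓔 A (Set.univ \ B)) : Prec 𝓔 B (Set.univ \ A) := by
  intro E hEm
  obtain ⟨K, hK, hsub⟩ := h _ (hE.inv_mem _ hEm)
  refine ⟨entImg E K, bounded_entImg hE hEm hK, ?_⟩
  rintro x ⟨y, hy, hxy⟩
  by_cases hx : x ∈ A
  · rcases hsub ⟨x, hx, hxy⟩ with h | h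
    · exact absurd hy h.2
    · exact Or.inr ⟨y, h, hxy⟩
  · exact Or.inl ⟨trivial, hx⟩

theorem prec_union_iff {X : Type*} {𝓔 : Set (Set (X × X))} (hE : IsCoarseStructure 𝓔)
    (hconn : CoarselyConnected 𝓔) {A B C : Set X} :
    Prec 𝓔 (A ∪ B) C ↔ Prec 𝓔 A C ∧ Prec 𝓔 B C := by
  refine ⟨fun h => ⟨fun E hEm => ?_, fun E hEm => ?_⟩, fun ⟨hA, hB⟩ E hEm => ?_⟩
  · obtain ⟨K, hK, hs⟩ := h E hEm
    exact ⟨K, hK, fun x ⟨a, ha, hxa⟩ => hs ⟨a, Or.inl ha, hxa⟩⟩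
  · obtain ⟨K, hK, hs⟩ := h E hEm
    exact ⟨K, hK, fun x ⟨a, ha, hxa⟩ => hs ⟨a, Or.inr ha, hxa⟩⟩
  · obtain ⟨K, hK, hs⟩ := hA E hEm
    obtain ⟨L, hL, ht⟩ := hB E hEm
    refine ⟨K ∪ L, bounded_union hE hconn hK hL, ?_⟩
    rintro x ⟨a, ha | ha, hxa⟩
    · exact (hs ⟨a, ha, hxa⟩).imp_right Or.inl
    · exact (ht ⟨a, ha, hxa⟩).imp_right Or.inr

/-- For a connected coarse space `(X, 𝓔)` with bornology `𝓑` of coarsely bounded sets,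
the relation `b` defined by `A b B` fails iff `A ≺ (X ∖ B)` is a coarse proximity
on `(X, 𝓑)` iff `(X, 𝓔)` is coarsely normal. -/
theorem stmt16 {X : Type*} (𝓔 : Set (Set (X × X)))
    (hE : IsCoarseStructure 𝓔) (hconn : CoarselyConnected 𝓔) :
    IsCoarseProximity X {A : Set X | CoarselyBounded 𝓔 A}
        (fun A B => ¬ Prec 𝓔 A (Set.univ \ B)) ↔
      CoarselyNormal 𝓔 := by
  constructor
  · intro h A B hAB
    obtain ⟨E, h1, h2⟩ := h.strong A (Set.univ \ B) (by simpa using hAB)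
    exact ⟨Set.univ \ E, not_not.1 h1, by simpa using h2⟩
  · intro hN
    refine ⟨fun A B h h' => h (prec_compl_symm hE h'), fun A B h => ?_, fun A B h h' => ?_,
      fun A B C => ?_, fun A B h => ?_⟩
    · have key : ∀ S T : Set X, CoarselyBounded 𝓔 S → Prec 𝓔 S T := fun S T hS E hEm =>
        ⟨entImg E S, bounded_entImg hE hEm hS, Set.subset_union_right⟩
      exact ⟨fun hA => h (key _ _ hA), fun hB => h (prec_compl_symm hE (key _ _ hB))⟩
    · -- The diagonal entourage already forces `A ∩ B` to be bounded.
      obtain ⟨K, hK, hs⟩ := h' _ hE.diag_mem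
      refine h (bounded_subset hE hK fun x hx => ?_)
      exact (hs ⟨x, hx.1, rfl⟩).resolve_left fun hn => hn.2 hx.2
    · simp only [prec_union_iff hE hconn, not_and_or]
    · obtain ⟨C, h1, h2⟩ := hN _ _ (not_not.1 h)
      exact ⟨Set.univ \ C, by simpa using h1, by simpa using h2⟩
end

section
/- Let (X, λ) be a connected asymptotic resemblance space and let 𝓑 be the bornology of asymptotically bounded sets. For A, B ⊆ X, define A ≺ B if and only if A and X ∖ B are asymptotically disjoint. Then the relation ≺ induces a coarse proximity on (X, 𝓑) — that is, the relation b defined by 'A b B fails if and only if A ≺ (X ∖ B)' is a coarse proximity on X — if and only if (X, λ) is asymptotically normal. -/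
namespace IsAsympResemblance

variable {X : Type*} {l : Set X → Set X → Prop}

lemma bounded_subset (hl : IsAsympResemblance l) {A B : Set X} (hAB : A ⊆ B)
    (hB : AsympBounded l B) : AsympBounded l A := by
  rcases Set.eq_empty_or_nonempty A with hA | hA
  · exact Or.inl hA
  rcases hB with rfl | ⟨x, hx⟩
  · exact Or.inl (Set.subset_empty_iff.1 hAB)
  rw [← Set.union_eq_self_of_subset_left hAB] at hx
  obtain ⟨A₁, -, h₁, -, hs, -, -, hl₁, -⟩ := hl.split A B {x} hx hA (hA.mono hAB)
  rw [h₁.subset_singleton_iff.1 hs] at hl₁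
  exact Or.inr ⟨x, hl₁⟩

lemma bounded_union (hl : IsAsympResemblance l) (hconn : AsympConnected l) {A B : Set X}
    (hA : AsympBounded l A) (hB : AsympBounded l B) : AsympBounded l (A ∪ B) := by
  rcases hA with rfl | ⟨x, hx⟩
  · simpa using hB
  rcases hB with rfl | ⟨y, hy⟩
  · rw [Set.union_empty]
    exact Or.inr ⟨x, hx⟩
  have h := hl.union _ _ _ _ hx (hl.trans _ _ _ hy (hconn y x))
  rw [Set.union_self] at h
  exact Or.inr ⟨x, h⟩

lemma bounded_of_rel (hl : IsAsympResemblance l) {A B : Set X} (hAB : l A B)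
    (hA : AsympBounded l A) : AsympBounded l B := by
  rcases hA with rfl | ⟨x, hx⟩
  · left
    by_contra hB
    have hB := Set.nonempty_iff_ne_empty.2 hB
    -- Splitting `B = B ∪ B` would produce a nonempty subset of `∅`.
    obtain ⟨A₁, -, h₁, -, hs, -⟩ :=
      hl.split B B ∅ (by simpa using hl.symm _ _ hAB) hB hB
    exact (h₁.mono hs).ne_empty rfl
  · exact Or.inr ⟨x, hl.trans _ _ _ (hl.symm _ _ hAB) hx⟩

lemma disjoint_union (hl : IsAsympResemblance l) (hconn : AsympConnected l) {A B C : Set X}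
    (hA : AsympDisjoint (AsympBounded l) l A C) (hB : AsympDisjoint (AsympBounded l) l B C) :
    AsympDisjoint (AsympBounded l) l (A ∪ B) C := by
  intro D hD C' hC' hDu hCu hDC
  have hDe : (D ∩ A) ∪ (D ∩ B) = D := by
    rw [← Set.inter_union_distrib_left, Set.inter_eq_left.2 hD]
  rcases Set.eq_empty_or_nonempty (D ∩ A) with hDA | hDA
  · rw [hDA, Set.empty_union] at hDe
    exact hB D (Set.inter_eq_left.1 hDe) C' hC' hDu hCu hDC
  rcases Set.eq_empty_or_nonempty (D ∩ B) with hDB | hDB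
  · rw [hDB, Set.union_empty] at hDe
    exact hA D (Set.inter_eq_left.1 hDe) C' hC' hDu hCu hDC
  obtain ⟨C₁, C₂, -, -, hC₁, hC₂, -, hl₁, hl₂⟩ :=
    hl.split (D ∩ A) (D ∩ B) C' (by rwa [hDe]) hDA hDB
  by_cases hbA : AsympBounded l (D ∩ A)
  · have hbB : ¬ AsympBounded l (D ∩ B) := fun h =>
      hDu (hDe ▸ hl.bounded_union hconn hbA h)
    exact hB _ Set.inter_subset_right C₂ (hC₂.trans hC') hbB
      (fun h => hbB (hl.bounded_of_rel (hl.symm _ _ hl₂) h)) hl₂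
  · exact hA _ Set.inter_subset_right C₁ (hC₁.trans hC') hbA
      (fun h => hbA (hl.bounded_of_rel (hl.symm _ _ hl₁) h)) hl₁

lemma disjoint_symm (hl : IsAsympResemblance l) {A C : Set X}
    (h : AsympDisjoint (AsympBounded l) l A C) : AsympDisjoint (AsympBounded l) l C A :=
  fun A' hA' C' hC' hAu hCu hAC => h C' hC' A' hA' hCu hAu (hl.symm _ _ hAC)

end IsAsympResemblance

lemma AsympDisjoint.mono_left {X : Type*} {bdd : Set X → Prop} {l : Set X → Set X → Prop}
    {A B C : Set X} (h : AsympDisjoint bdd l B C) (hAB : A ⊆ B) : AsympDisjoint bdd l A C :=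
  fun A' hA' => h A' (hA'.trans hAB)

/-- For a connected asymptotic resemblance space `(X, λ)` with bornology `𝓑` of
asymptotically bounded sets, defining `A ≺ B` iff `A` and `X ∖ B` are asymptotically
disjoint, the relation `b` with `A b B` fails iff `A ≺ (X ∖ B)` is a coarse proximity
on `(X, 𝓑)` iff `(X, λ)` is asymptotically normal. -/
theorem stmt18 {X : Type*} (l : Set X → Set X → Prop)
    (hl : IsAsympResemblance l) (hconn : AsympConnected l) :
    IsCoarseProximity X {A : Set X | AsympBounded l A}
        (fun A B => ¬ AsympDisjoint (AsympBounded l) l A (Set.univ \ (Set.univ \ B))) ↔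
      AsympNormal (AsympBounded l) l := by
  have hcc : ∀ B : Set X, Set.univ \ (Set.univ \ B) = B := fun B => by simp
  simp only [hcc]
  constructor
  · intro hb A₁ A₂ hdis
    obtain ⟨E, h₁, h₂⟩ := hb.strong A₁ A₂ (not_not.2 hdis)
    exact ⟨E, Set.univ \ E, by simp, not_not.1 h₁, hl.disjoint_symm (not_not.1 h₂)⟩
  · intro hn
    refine ⟨fun A B h h' => h (hl.disjoint_symm h'), ?_, ?_, ?_, ?_⟩
    · refine fun A B h => ⟨fun hA => h ?_, fun hB => h ?_⟩
      · exact fun A' hA' _ _ hu _ _ => hu (hl.bounded_subset hA' hA)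
      · exact fun _ _ C' hC' _ hu _ => hu (hl.bounded_subset hC' hB)
    · exact fun A B h h' => h' _ Set.inter_subset_left _ Set.inter_subset_right h h (hl.refl _)
    · intro A B C
      rw [← not_and_or, not_iff_not]
      exact ⟨fun h => ⟨h.mono_left Set.subset_union_left, h.mono_left Set.subset_union_right⟩,
        fun h => hl.disjoint_union hconn h.1 h.2⟩
    · intro A B h
      obtain ⟨X₁, X₂, hX, h₁, h₂⟩ := hn A B (not_not.1 h)
      refine ⟨X₁, not_not.2 h₁, not_not.2 ((hl.disjoint_symm h₂).mono_left ?_)⟩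
      rw [hX]
      exact Set.sdiff_subset_iff.2 subset_rfl
end

section
/- Let (X, λ) be a connected, asymptotically normal asymptotic resemblance space and let 𝓑 be the bornology of asymptotically bounded sets. Define a relation b on the power set of X by: A b B if and only if A and B are not asymptotically disjoint, i.e., there exist an unbounded A' ⊆ A and an unbounded B' ⊆ B with A' λ B'. Then b is a coarse proximity on X (with respect to 𝓑). -/
theorem AsympBounded.mono {X : Type*} {l : Set X → Set X → Prop} (hl : IsAsympResemblance l)
    {A C : Set X} (hA : AsympBounded l A) (hCA : C ⊆ A) : AsympBounded l C := by
  rcases C.eq_empty_or_nonempty with hC | hC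
  · exact Or.inl hC
  rcases (A \ C).eq_empty_or_nonempty with hD | hD
  · rwa [hCA.antisymm (Set.sdiff_eq_empty.mp hD)]
  rcases hA with rfl | ⟨x, hx⟩
  · exact Or.inl (Set.subset_empty_iff.mp hCA)
  rw [← Set.union_sdiff_cancel hCA] at hx
  obtain ⟨A₁, -, hne, -, hsub, -, -, h, -⟩ := hl.split _ _ _ hx hC hD
  rw [hne.subset_singleton_iff.mp hsub] at h
  exact Or.inr ⟨x, h⟩

theorem AsympBounded.union {X : Type*} {l : Set X → Set X → Prop} (hl : IsAsympResemblance l)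
    (hconn : AsympConnected l) {A C : Set X} (hA : AsympBounded l A) (hC : AsympBounded l C) :
    AsympBounded l (A ∪ C) := by
  rcases hA with rfl | ⟨x, hx⟩
  · rwa [Set.empty_union]
  rcases hC with rfl | ⟨y, hy⟩
  · rw [Set.union_empty]
    exact Or.inr ⟨x, hx⟩
  · have h := hl.union _ _ _ _ hx (hl.trans _ _ _ hy (hconn y x))
    rw [Set.union_self] at h
    exact Or.inr ⟨x, h⟩

/-- An unbounded part `P` of a set resembling `C` resembles an unbounded part of `C`. -/
theorem IsAsympResemblance.exists_unbounded_subset {X : Type*} {l : Set X → Set X → Prop}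
    (hl : IsAsympResemblance l) {P Q C : Set X} (h : l (P ∪ Q) C) (hP : ¬ AsympBounded l P)
    (hC : ¬ AsympBounded l C) : ∃ C' ⊆ C, ¬ AsympBounded l C' ∧ l P C' := by
  rcases Q.eq_empty_or_nonempty with rfl | hQ
  · rw [Set.union_empty] at h
    exact ⟨C, subset_rfl, hC, h⟩
  have hPne : P.Nonempty := Set.nonempty_iff_ne_empty.mpr fun h0 => hP (Or.inl h0)
  obtain ⟨C₁, -, hne, -, hsub, -, -, h₁, -⟩ := hl.split _ _ _ h hPne hQ
  refine ⟨C₁, hsub, ?_, h₁⟩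
  rintro (h0 | ⟨x, hx⟩)
  · exact hne.ne_empty h0
  · exact hP (Or.inr ⟨x, hl.trans _ _ _ h₁ hx⟩)

/-- For a connected, asymptotically normal asymptotic resemblance space `(X, λ)` with
bornology `𝓑` of asymptotically bounded sets, the relation `A b B` iff there exist
unbounded `A' ⊆ A` and unbounded `B' ⊆ B` with `A' λ B'` (i.e. `A` and `B` are not
asymptotically disjoint) is a coarse proximity on `X`. -/
theorem stmt19 {X : Type*} (l : Set X → Set X → Prop)
    (hl : IsAsympResemblance l) (hconn : AsympConnected l)
    (hnorm : AsympNormal (AsympBounded l) l) :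
    IsCoarseProximity X {A : Set X | AsympBounded l A}
      (fun A B => ∃ A' ⊆ A, ∃ B' ⊆ B,
        ¬ AsympBounded l A' ∧ ¬ AsympBounded l B' ∧ l A' B') := by
  constructor
  · rintro A B ⟨A', hA, B', hB, hA', hB', h⟩
    exact ⟨B', hB, A', hA, hB', hA', hl.symm _ _ h⟩
  · rintro A B ⟨A', hA, B', hB, hA', hB', -⟩
    exact ⟨fun h => hA' (AsympBounded.mono hl h hA), fun h => hB' (AsympBounded.mono hl h hB)⟩
  · intro A B h
    exact ⟨A ∩ B, Set.inter_subset_left, A ∩ B, Set.inter_subset_right, h, h, hl.refl _⟩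
  · intro A B C
    constructor
    · rintro ⟨A', hA, C', hC, hA', hC', h⟩
      have hsplit : A' = A' ∩ A ∪ A' ∩ B := by
        rw [← Set.inter_union_distrib_left, Set.inter_eq_left.mpr hA]
      by_cases hP : AsympBounded l (A' ∩ A)
      · have hQ : ¬ AsympBounded l (A' ∩ B) := fun hQ =>
          hA' (hsplit ▸ AsympBounded.union hl hconn hP hQ)
        rw [hsplit, Set.union_comm] at h
        obtain ⟨C₁, hC₁, hu, h₁⟩ := hl.exists_unbounded_subset h hQ hC'
        exact Or.inr ⟨_, Set.inter_subset_right, C₁, hC₁.trans hC, hQ, hu, h₁⟩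
      · rw [hsplit] at h
        obtain ⟨C₁, hC₁, hu, h₁⟩ := hl.exists_unbounded_subset h hP hC'
        exact Or.inl ⟨_, Set.inter_subset_right, C₁, hC₁.trans hC, hP, hu, h₁⟩
    · rintro (⟨A', hA, h⟩ | ⟨A', hA, h⟩)
      · exact ⟨A', hA.trans Set.subset_union_left, h⟩
      · exact ⟨A', hA.trans Set.subset_union_right, h⟩
  · intro A B hAB
    obtain ⟨X₁, X₂, hX, h₁, h₂⟩ := hnorm A B fun A' hA B' hB hA' hB' h =>
      hAB ⟨A', hA, B', hB, hA', hB', h⟩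
    refine ⟨X₁, ?_, ?_⟩
    · rintro ⟨A', hA, E', hE, hA', hE', h⟩
      exact h₁ A' hA E' hE hA' hE' h
    · rintro ⟨E', hE, B', hB, hE', hB', h⟩
      have hE₂ : E' ⊆ X₂ := hE.trans (Set.sdiff_subset_iff.mpr hX.subset)
      exact h₂ B' hB E' hE₂ hB' hE' (hl.symm _ _ h)
end
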